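/- Suppose Q(u) ≥ 0 for every u ∈ C_c^∞(Ω) and Q admits a ground state v. Then v is a positive solution of the equation Q'(u) = 0 in Ω, i.e., ∫_Ω (|∇v|^{p−2} ∇v·∇φ + V v^{p−1} φ) dx = 0 for every φ ∈ C_c^∞(Ω). -/

import Mathlib

open MeasureTheory Filter
open scoped RealInnerProductSpace Topology

noncomputable section

/-- Euclidean space `ℝ^d`. -/
abbrev Euc (d : ℕ) := EuclideanSpace ℝ (Fin d)

/-- A test function on `Ω`: smooth with compact support contained in `Ω`. -/
def IsTestFun {d : ℕ} (Ω : Set (Euc d)) (u : Euc d → ℝ) : Prop :=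
  ContDiff ℝ (⊤ : ℕ∞) u ∧ HasCompactSupport u ∧ tsupport u ⊆ Ω

/-- The energy functional `Q(u) = ∫_Ω (|∇u|^p + V |u|^p) dx`. -/
def energyQ {d : ℕ} (Ω : Set (Euc d)) (V : Euc d → ℝ) (p : ℝ) (u : Euc d → ℝ) : ℝ :=
  ∫ x in Ω, (‖gradient u x‖ ^ p + V x * |u x| ^ p)

/-- `V` is measurable and bounded on every compact subset of `Ω`. -/
def LocBddPotential {d : ℕ} (Ω : Set (Euc d)) (V : Euc d → ℝ) : Prop :=
  Measurable V ∧ ∀ K : Set (Euc d), K ⊆ Ω → IsCompact K → ∃ C : ℝ, ∀ x ∈ K, |V x| ≤ C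

/-- A positive supersolution of `Q'(u) = 0` in `Ω`. -/
def IsPositiveSupersolution {d : ℕ} (Ω : Set (Euc d)) (V : Euc d → ℝ) (p : ℝ)
    (v : Euc d → ℝ) : Prop :=
  ContDiffOn ℝ 1 v Ω ∧ (∀ x ∈ Ω, 0 < v x) ∧
    ∀ φ : Euc d → ℝ, IsTestFun Ω φ → (∀ x, 0 ≤ φ x) →
      0 ≤ ∫ x in Ω, (‖gradient v x‖ ^ (p - 2) * ⟪gradient v x, gradient φ x⟫
            + V x * v x ^ (p - 1) * φ x)

/-- A positive (weak) solution of `Q'(u) = 0` in `Ω`. -/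
def IsPositiveSolution {d : ℕ} (Ω : Set (Euc d)) (V : Euc d → ℝ) (p : ℝ)
    (v : Euc d → ℝ) : Prop :=
  ContDiffOn ℝ 1 v Ω ∧ (∀ x ∈ Ω, 0 < v x) ∧
    ∀ φ : Euc d → ℝ, IsTestFun Ω φ →
      (∫ x in Ω, (‖gradient v x‖ ^ (p - 2) * ⟪gradient v x, gradient φ x⟫
            + V x * v x ^ (p - 1) * φ x)) = 0

/-- A null sequence for the functional `Q`. -/
def IsNullSequence {d : ℕ} (Ω : Set (Euc d)) (V : Euc d → ℝ) (p : ℝ)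
    (u : ℕ → Euc d → ℝ) : Prop :=
  (∀ k, IsTestFun Ω (u k)) ∧ (∀ k x, 0 ≤ u k x) ∧
    ∃ B : Set (Euc d), IsOpen B ∧ IsCompact (closure B) ∧ closure B ⊆ Ω ∧
      (∀ k, (∫ x in B, u k x ^ p) = 1) ∧
      Tendsto (fun k => energyQ Ω V p (u k)) atTop (𝓝 0)

/-- A ground state of `Q`: a positive `C¹` function on `Ω` which is the limit in
`L^p_loc(Ω)` of a null sequence. -/
def IsGroundState {d : ℕ} (Ω : Set (Euc d)) (V : Euc d → ℝ) (p : ℝ)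
    (v : Euc d → ℝ) : Prop :=
  ContDiffOn ℝ 1 v Ω ∧ (∀ x ∈ Ω, 0 < v x) ∧
    ∃ u : ℕ → Euc d → ℝ, IsNullSequence Ω V p u ∧
      ∀ K : Set (Euc d), K ⊆ Ω → IsCompact K →
        Tendsto (fun k => ∫ x in K, |u k x - v x| ^ p) atTop (𝓝 0)

/-- `Q` has a weighted spectral gap (is strictly positive) in `Ω`. -/
def HasSpectralGap {d : ℕ} (Ω : Set (Euc d)) (V : Euc d → ℝ) (p : ℝ) : Prop :=
  ∃ W : Euc d → ℝ, ContinuousOn W Ω ∧ (∀ x ∈ Ω, 0 < W x) ∧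
    ∀ u : Euc d → ℝ, IsTestFun Ω u → (∫ x in Ω, W x * |u x| ^ p) ≤ energyQ Ω V p u

/-- `c_B`: the infimum of `Q(u)` over test functions with `∫_B |u|^p = 1`. -/
def cB {d : ℕ} (Ω B : Set (Euc d)) (V : Euc d → ℝ) (p : ℝ) : ℝ :=
  sInf { q : ℝ | ∃ u : Euc d → ℝ, IsTestFun Ω u ∧ (∫ x in B, |u x| ^ p) = 1 ∧
    q = energyQ Ω V p u }

/-- The Picone Lagrangian `L(u,v)`. -/
def piconeL {d : ℕ} (p : ℝ) (u v : Euc d → ℝ) (x : Euc d) : ℝ :=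
  ‖gradient u x‖ ^ p + (p - 1) * (u x / v x) ^ p * ‖gradient v x‖ ^ p
    - p * (u x / v x) ^ (p - 1) *
        (‖gradient v x‖ ^ (p - 2) * ⟪gradient u x, gradient v x⟫)

/-!
A null sequence `u` comes with no bound on its gradients; the bound has to be extracted from
`Q ≥ 0`. Glue a comparison function `h` into `u k`, testing with `w = (1 - ζ^p) u k + ζ^p h` for a
cutoff `0 ≤ ζ ≤ 1`. Convexity of `|·|^p` gives
`|∇w|^p ≤ (1 - ζ^p) |∇(u k)|^p + |ζ ∇h + p (h - u k) ∇ζ|^p`,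
so `Q(w) ≥ 0` bounds `∫ |ζ ∇(u k)|^p` by `Q(u k)` plus terms without derivatives of `u k`, which
pass to the limit under `L^p_loc` convergence. The left side is weakly lower semicontinuous, hence
the inequality survives with `v` in place of `u k`. For `h = v + t φ` with `ζ = 1` near the support
of `φ` it says that `t ↦ ∫ (|ζ ∇v + t ∇φ|^p + V |v + t φ|^p)`, taken over the support of `ζ`, is
minimal at `t = 0`. Its derivative there is `p` times the left side of the equation tested with `φ`.
-/

section PowerInequalities

variable {F : Type*} [NormedAddCommGroup F] {p : ℝ}

theorem exists_abs_norm_rpow_sub_norm_rpow_le (hp : 0 < p) {ε : ℝ} (hε : 0 < ε) :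
    ∃ C : ℝ, ∀ a b : F, |‖a‖ ^ p - ‖b‖ ^ p| ≤ ε * ‖b‖ ^ p + C * ‖a - b‖ ^ p := by
  have hcont : ContinuousAt (fun s : ℝ => |s| ^ p) 1 :=
    (continuous_abs.rpow_const fun _ => Or.inr hp.le).continuousAt
  obtain ⟨δ, hδ, hball⟩ := Metric.continuousAt_iff.1 hcont ε hε
  refine ⟨(1 + δ⁻¹) ^ p, fun a b => ?_⟩
  have hab : |‖a‖ - ‖b‖| ≤ ‖a - b‖ := abs_norm_sub_norm_le a b
  rcases lt_or_ge ‖a - b‖ (δ * ‖b‖) with hnear | hfar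
  · have hb : 0 < ‖b‖ := pos_of_mul_pos_right ((norm_nonneg _).trans_lt hnear) hδ.le
    have hratio : dist (‖a‖ / ‖b‖) 1 < δ := by
      rw [Real.dist_eq, div_sub_one hb.ne', abs_div, abs_of_pos hb, div_lt_iff₀ hb]
      exact hab.trans_lt hnear
    have hpow : |(‖a‖ / ‖b‖) ^ p - 1| ≤ ε := by
      simpa only [Real.dist_eq, abs_one, Real.one_rpow, abs_div, abs_norm] using (hball hratio).le
    have hscale : ‖a‖ ^ p = (‖a‖ / ‖b‖) ^ p * ‖b‖ ^ p := by
      rw [← Real.mul_rpow (by positivity) hb.le, div_mul_cancel₀ _ hb.ne']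
    calc |‖a‖ ^ p - ‖b‖ ^ p| = |(‖a‖ / ‖b‖) ^ p - 1| * ‖b‖ ^ p := by
          rw [hscale, ← sub_one_mul, abs_mul, abs_of_nonneg (Real.rpow_nonneg hb.le p)]
      _ ≤ ε * ‖b‖ ^ p := by gcongr
      _ ≤ ε * ‖b‖ ^ p + (1 + δ⁻¹) ^ p * ‖a - b‖ ^ p := le_add_of_nonneg_right (by positivity)
  · have hb : ‖b‖ ≤ δ⁻¹ * ‖a - b‖ := (le_inv_mul_iff₀ hδ).2 hfar
    have ha : ‖a‖ ≤ (1 + δ⁻¹) * ‖a - b‖ := by linarith [(abs_le.1 hab).2]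
    have hb' : ‖b‖ ≤ (1 + δ⁻¹) * ‖a - b‖ := by linarith [norm_nonneg (a - b)]
    calc |‖a‖ ^ p - ‖b‖ ^ p| ≤ ((1 + δ⁻¹) * ‖a - b‖) ^ p :=
          abs_sub_le_of_nonneg_of_le (by positivity) (by gcongr) (by positivity) (by gcongr)
      _ = (1 + δ⁻¹) ^ p * ‖a - b‖ ^ p := Real.mul_rpow (by positivity) (norm_nonneg _)
      _ ≤ ε * ‖b‖ ^ p + (1 + δ⁻¹) ^ p * ‖a - b‖ ^ p := le_add_of_nonneg_left (by positivity)

-- For `0 < θ` this is convexity of `‖·‖ ^ p` at the points `a` and `b + θ⁻¹ • r`; the power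
-- `θ ^ (p - 1)` in front of `r` is exactly what the weight `θ ^ p` absorbs.
theorem norm_convexComb_add_smul_rpow_le [NormedSpace ℝ F] (hp : 1 < p) {θ : ℝ} (hθ₀ : 0 ≤ θ)
    (hθ₁ : θ ≤ 1) (a b r : F) :
    ‖(1 - θ ^ p) • a + θ ^ p • b + θ ^ (p - 1) • r‖ ^ p
      ≤ (1 - θ ^ p) * ‖a‖ ^ p + ‖θ • b + r‖ ^ p := by
  have hp₀ : 0 < p := one_pos.trans hp
  rcases hθ₀.eq_or_lt with rfl | hθ
  · simp only [Real.zero_rpow hp₀.ne', Real.zero_rpow (sub_pos.2 hp).ne', sub_zero, one_smul,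
      zero_smul, add_zero, one_mul, zero_add]
    exact le_add_of_nonneg_right (by positivity)
  have hθp₁ : θ ^ p ≤ 1 := Real.rpow_le_one hθ₀ hθ₁ hp₀.le
  have hpow : θ ^ p * θ⁻¹ = θ ^ (p - 1) := by rw [Real.rpow_sub_one hθ.ne', div_eq_mul_inv]
  calc ‖(1 - θ ^ p) • a + θ ^ p • b + θ ^ (p - 1) • r‖ ^ p
      = ‖(1 - θ ^ p) • a + θ ^ p • (b + θ⁻¹ • r)‖ ^ p := by
        rw [smul_add, smul_smul, hpow, add_assoc]
    _ ≤ ((1 - θ ^ p) * ‖a‖ + θ ^ p * ‖b + θ⁻¹ • r‖) ^ p := by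
        gcongr
        refine (norm_add_le _ _).trans_eq ?_
        rw [norm_smul_of_nonneg (sub_nonneg.2 hθp₁), norm_smul_of_nonneg (Real.rpow_nonneg hθ₀ p)]
    _ ≤ (1 - θ ^ p) * ‖a‖ ^ p + θ ^ p * ‖b + θ⁻¹ • r‖ ^ p :=
        (convexOn_rpow hp.le).2 (norm_nonneg a) (norm_nonneg _) (sub_nonneg.2 hθp₁)
          (Real.rpow_nonneg hθ₀ p) (sub_add_cancel 1 _)
    _ = (1 - θ ^ p) * ‖a‖ ^ p + ‖θ • b + r‖ ^ p := by
        rw [← Real.mul_rpow hθ₀ (norm_nonneg _), ← norm_smul_of_nonneg hθ₀, smul_add,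
          smul_inv_smul₀ hθ.ne']

end PowerInequalities

section DualityMap

variable {F : Type*} [NormedAddCommGroup F] [InnerProductSpace ℝ F] {p q : ℝ}

/-- The duality map `a ↦ |a|^(p-2) a`, which is `1/p` times the gradient of `|a|^p`. -/
def dualityMap (p : ℝ) (a : F) : F :=
  ‖a‖ ^ (p - 2) • a

theorem dualityMap_zero : dualityMap p (0 : F) = 0 :=
  smul_zero _

theorem dualityMap_of_pos {a : ℝ} (ha : 0 < a) : dualityMap p a = a ^ (p - 1) := by
  rw [dualityMap, Real.norm_of_nonneg ha.le, smul_eq_mul, ← Real.rpow_add_one ha.ne']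
  ring_nf

theorem norm_dualityMap (hp : 1 < p) (a : F) : ‖dualityMap p a‖ = ‖a‖ ^ (p - 1) := by
  rw [dualityMap, norm_smul, Real.norm_of_nonneg (by positivity)]
  rcases eq_or_ne a 0 with rfl | ha
  · rw [norm_zero, mul_zero, Real.zero_rpow (sub_pos.2 hp).ne']
  · rw [← Real.rpow_add_one (norm_ne_zero_iff.2 ha)]
    ring_nf

theorem inner_dualityMap_self (hp : 0 < p) (a : F) : ⟪dualityMap p a, a⟫ = ‖a‖ ^ p := by
  rw [dualityMap, real_inner_smul_left, real_inner_self_eq_norm_sq]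
  rcases eq_or_ne a 0 with rfl | ha
  · simp [Real.zero_rpow hp.ne']
  · rw [← Real.rpow_natCast, ← Real.rpow_add (norm_pos_iff.2 ha)]
    norm_num

theorem fderiv_norm_rpow_eq_innerSL_dualityMap (hp : 1 < p) (a : F) :
    fderiv ℝ (fun b : F => ‖b‖ ^ p) a = p • innerSL ℝ (dualityMap p a) := by
  rw [fderiv_norm_rpow a hp, dualityMap, map_smul, smul_smul]

theorem continuous_dualityMap (hp : 1 < p) : Continuous (dualityMap p : F → F) := by
  have hfderiv : Continuous fun a : F => innerSL ℝ (dualityMap p a) :=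
    (((contDiff_norm_rpow hp).continuous_fderiv one_ne_zero).const_smul p⁻¹).congr fun a => by
      rw [Pi.smul_apply, fderiv_norm_rpow_eq_innerSL_dualityMap hp,
        inv_smul_smul₀ (one_pos.trans hp).ne']
  have hisometry : Isometry (innerSL ℝ : F →L[ℝ] F →L[ℝ] ℝ) :=
    AddMonoidHomClass.isometry_of_norm _ (innerSL_apply_norm ℝ)
  exact hisometry.isEmbedding.continuous_iff.2 hfderiv

theorem inner_le_norm_rpow_div_add (hpq : p.HolderConjugate q) (a b : F) :
    ⟪a, b⟫ ≤ ‖a‖ ^ q / q + ‖b‖ ^ p / p :=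
  (real_inner_le_norm a b).trans
    (Real.young_inequality_of_nonneg (norm_nonneg a) (norm_nonneg b) hpq.symm)

theorem inner_dualityMap_eq_norm_rpow_div_add (hpq : p.HolderConjugate q) (a : F) :
    ⟪dualityMap p a, a⟫ = ‖dualityMap p a‖ ^ q / q + ‖a‖ ^ p / p := by
  rw [norm_dualityMap hpq.lt, ← Real.rpow_mul (norm_nonneg a), hpq.sub_one_mul_conj,
    inner_dualityMap_self hpq.pos, div_eq_mul_inv, div_eq_mul_inv, ← mul_add,
    hpq.symm.inv_add_inv_eq_one, mul_one]

theorem hasDerivAt_norm_add_smul_rpow (hp : 1 < p) (a b : F) (t : ℝ) :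
    HasDerivAt (fun s : ℝ => ‖a + s • b‖ ^ p) (p * ⟪dualityMap p (a + t • b), b⟫) t := by
  have hline : HasDerivAt (fun s : ℝ => a + s • b) b t := by
    simpa using ((hasDerivAt_id t).smul_const b).const_add a
  have h := (differentiable_norm_rpow hp (a + t • b)).hasFDerivAt.comp_hasDerivAt t hline
  rwa [fderiv_norm_rpow_eq_innerSL_dualityMap hp] at h

theorem abs_inner_dualityMap_add_smul_le (hp : 1 < p) (a b : F) {t : ℝ} (ht : |t| ≤ 1) :
    |⟪dualityMap p (a + t • b), b⟫| ≤ (‖a‖ + ‖b‖) ^ p := by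
  have hnorm : ‖a + t • b‖ ≤ ‖a‖ + ‖b‖ := by
    refine (norm_add_le _ _).trans (add_le_add_right ?_ _)
    rw [norm_smul]
    exact mul_le_of_le_one_left (norm_nonneg _) ht
  calc |⟪dualityMap p (a + t • b), b⟫| ≤ ‖a + t • b‖ ^ (p - 1) * ‖b‖ := by
        rw [← norm_dualityMap hp]
        exact abs_real_inner_le_norm _ _
    _ ≤ (‖a‖ + ‖b‖) ^ (p - 1) * (‖a‖ + ‖b‖) := by
        gcongr
        exact le_add_of_nonneg_left (norm_nonneg _)
    _ = (‖a‖ + ‖b‖) ^ p := by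
        rw [← Real.rpow_add_one' (by positivity) (by linarith), sub_add_cancel]

end DualityMap

section LpConvergence

variable {X F : Type*} [MeasurableSpace X] {μ : Measure X} [NormedAddCommGroup F] {p : ℝ}

theorem memLp_restrict_of_isCompact [TopologicalSpace X] [T2Space X] [OpensMeasurableSpace X]
    [SecondCountableTopologyEither X F] [IsFiniteMeasureOnCompacts μ] {f : X → F}
    (hf : Continuous f) {S : Set X} (hS : IsCompact S) (r : ENNReal) :
    MemLp f r (μ.restrict S) := by
  have : IsFiniteMeasure (μ.restrict S) := isFiniteMeasure_restrict.2 hS.measure_lt_top.ne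
  obtain ⟨C, hC⟩ := hS.exists_bound_of_continuousOn hf.continuousOn
  exact MemLp.of_bound hf.aestronglyMeasurable C (ae_restrict_of_forall_mem hS.measurableSet hC)

theorem integrable_norm_rpow_of_memLp (hp : 0 < p) {f : X → F}
    (hf : MemLp f (ENNReal.ofReal p) μ) : Integrable (fun x => ‖f x‖ ^ p) μ := by
  simpa only [ENNReal.toReal_ofReal hp.le] using
    hf.integrable_norm_rpow (ENNReal.ofReal_pos.2 hp).ne' ENNReal.ofReal_ne_top

theorem integrable_mul_norm_rpow_of_memLp (hp : 0 < p) {W : X → ℝ}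
    (hW : AEStronglyMeasurable W μ) {M : ℝ} (hWM : ∀ᵐ x ∂μ, |W x| ≤ M) {f : X → F}
    (hf : MemLp f (ENNReal.ofReal p) μ) : Integrable (fun x => W x * ‖f x‖ ^ p) μ :=
  (integrable_norm_rpow_of_memLp hp hf).bdd_mul hW hWM

variable {ι : Type*} {l : Filter ι} {f : X → F} {g : ι → X → F}

theorem tendsto_integral_abs_norm_rpow_sub (hp : 0 < p) (hf : MemLp f (ENNReal.ofReal p) μ)
    (hg : ∀ k, MemLp (g k) (ENNReal.ofReal p) μ)
    (hgf : Tendsto (fun k => ∫ x, ‖g k x - f x‖ ^ p ∂μ) l (𝓝 0)) :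
    Tendsto (fun k => ∫ x, |‖g k x‖ ^ p - ‖f x‖ ^ p| ∂μ) l (𝓝 0) := by
  set A := ∫ x, ‖f x‖ ^ p ∂μ
  have hA : 0 ≤ A := integral_nonneg fun x => by positivity
  refine tendsto_order.2 ⟨fun c hc => Eventually.of_forall fun k =>
    hc.trans_le (integral_nonneg fun x => abs_nonneg _), fun η hη => ?_⟩
  obtain ⟨C, hC⟩ := exists_abs_norm_rpow_sub_norm_rpow_le (F := F) hp
    (div_pos hη (add_pos_of_nonneg_of_pos hA one_pos))
  have hbound : ∀ k, ∫ x, |‖g k x‖ ^ p - ‖f x‖ ^ p| ∂μ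
      ≤ η / (A + 1) * A + C * ∫ x, ‖g k x - f x‖ ^ p ∂μ := fun k => by
    have hfp := (integrable_norm_rpow_of_memLp hp hf).const_mul (η / (A + 1))
    have hgfp : Integrable (fun x => C * ‖g k x - f x‖ ^ p) μ :=
      (integrable_norm_rpow_of_memLp hp ((hg k).sub hf)).const_mul C
    rw [← integral_const_mul, ← integral_const_mul, ← integral_add hfp hgfp]
    exact integral_mono_of_nonneg (Eventually.of_forall fun x => abs_nonneg _) (hfp.add hgfp)
      (Eventually.of_forall fun x => hC (g k x) (f x))
  have hlim : Tendsto (fun k => η / (A + 1) * A + C * ∫ x, ‖g k x - f x‖ ^ p ∂μ) l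
      (𝓝 (η / (A + 1) * A)) := by
    simpa only [mul_zero, add_zero] using (hgf.const_mul C).const_add (η / (A + 1) * A)
  have hlt : η / (A + 1) * A < η := by
    rw [div_mul_eq_mul_div, div_lt_iff₀ (by positivity)]
    exact mul_lt_mul_of_pos_left (lt_add_one A) hη
  exact (hlim.eventually_lt_const hlt).mono fun k hk => (hbound k).trans_lt hk

theorem tendsto_integral_mul_norm_rpow (hp : 0 < p) {W : X → ℝ}
    (hW : AEStronglyMeasurable W μ) {M : ℝ} (hWM : ∀ᵐ x ∂μ, |W x| ≤ M)
    (hf : MemLp f (ENNReal.ofReal p) μ) (hg : ∀ k, MemLp (g k) (ENNReal.ofReal p) μ)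
    (hgf : Tendsto (fun k => ∫ x, ‖g k x - f x‖ ^ p ∂μ) l (𝓝 0)) :
    Tendsto (fun k => ∫ x, W x * ‖g k x‖ ^ p ∂μ) l (𝓝 (∫ x, W x * ‖f x‖ ^ p ∂μ)) := by
  have hbound : ∀ k, dist (∫ x, W x * ‖g k x‖ ^ p ∂μ) (∫ x, W x * ‖f x‖ ^ p ∂μ)
      ≤ M * ∫ x, |‖g k x‖ ^ p - ‖f x‖ ^ p| ∂μ := fun k => by
    rw [dist_eq_norm, ← integral_sub (integrable_mul_norm_rpow_of_memLp hp hW hWM (hg k))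
      (integrable_mul_norm_rpow_of_memLp hp hW hWM hf), ← integral_const_mul]
    refine norm_integral_le_of_norm_le (((integrable_norm_rpow_of_memLp hp (hg k)).sub
      (integrable_norm_rpow_of_memLp hp hf)).abs.const_mul M) ?_
    filter_upwards [hWM] with x hx
    rw [← mul_sub, norm_mul]
    exact mul_le_mul_of_nonneg_right hx (norm_nonneg _)
  refine tendsto_iff_dist_tendsto_zero.2 (squeeze_zero (fun k => dist_nonneg) hbound ?_)
  simpa only [mul_zero] using (tendsto_integral_abs_norm_rpow_sub hp hf hg hgf).const_mul M

theorem tendsto_integral_norm_rpow (hp : 0 < p) (hf : MemLp f (ENNReal.ofReal p) μ)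
    (hg : ∀ k, MemLp (g k) (ENNReal.ofReal p) μ)
    (hgf : Tendsto (fun k => ∫ x, ‖g k x - f x‖ ^ p ∂μ) l (𝓝 0)) :
    Tendsto (fun k => ∫ x, ‖g k x‖ ^ p ∂μ) l (𝓝 (∫ x, ‖f x‖ ^ p ∂μ)) := by
  simpa only [one_mul] using tendsto_integral_mul_norm_rpow (W := fun _ => 1) (M := 1) hp
    aestronglyMeasurable_const (Eventually.of_forall fun _ => abs_one.le) hf hg hgf

theorem tendsto_integral_norm_sub_rpow_of_le_mul {F' : Type*} [NormedAddCommGroup F']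
    {f' : X → F'} {g' : ι → X → F'} (hp : 0 < p) (hf : MemLp f (ENNReal.ofReal p) μ)
    (hg : ∀ k, MemLp (g k) (ENNReal.ofReal p) μ)
    (hgf : Tendsto (fun k => ∫ x, ‖g k x - f x‖ ^ p ∂μ) l (𝓝 0)) {M : ℝ} (hM : 0 ≤ M)
    (hle : ∀ k, ∀ᵐ x ∂μ, ‖g' k x - f' x‖ ≤ M * ‖g k x - f x‖) :
    Tendsto (fun k => ∫ x, ‖g' k x - f' x‖ ^ p ∂μ) l (𝓝 0) := by
  have hbound : ∀ k, ∫ x, ‖g' k x - f' x‖ ^ p ∂μ ≤ M ^ p * ∫ x, ‖g k x - f x‖ ^ p ∂μ := fun k => by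
    rw [← integral_const_mul]
    refine integral_mono_of_nonneg (Eventually.of_forall fun x => by positivity)
      ((integrable_norm_rpow_of_memLp hp ((hg k).sub hf)).const_mul _) ?_
    filter_upwards [hle k] with x hx
    simpa only [Real.mul_rpow hM (norm_nonneg _)] using
      Real.rpow_le_rpow (norm_nonneg _) hx hp.le
  refine squeeze_zero (fun k => integral_nonneg fun x => by positivity) hbound ?_
  simpa only [mul_zero] using hgf.const_mul (M ^ p)

theorem tendsto_integral_norm_sub_rpow_of_le [IsFiniteMeasure μ] (hp : 0 < p) {ε : ι → ℝ}
    (hε : Tendsto ε l (𝓝 0)) (hle : ∀ k, ∀ᵐ x ∂μ, ‖g k x - f x‖ ≤ ε k) :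
    Tendsto (fun k => ∫ x, ‖g k x - f x‖ ^ p ∂μ) l (𝓝 0) := by
  have hbound : ∀ k, ∫ x, ‖g k x - f x‖ ^ p ∂μ ≤ μ.real Set.univ * ε k ^ p := fun k => by
    rw [← smul_eq_mul, ← integral_const]
    refine integral_mono_of_nonneg (Eventually.of_forall fun x => by positivity)
      (integrable_const _) ?_
    filter_upwards [hle k] with x hx using Real.rpow_le_rpow (norm_nonneg _) hx hp.le
  refine squeeze_zero (fun k => integral_nonneg fun x => by positivity) hbound ?_
  simpa only [Real.zero_rpow hp.ne', mul_zero] using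
    (hε.rpow_const (Or.inr hp.le)).const_mul (μ.real Set.univ)

end LpConvergence

section LpPairing

variable {X F : Type*} [MeasurableSpace X] {μ : Measure X} [NormedAddCommGroup F]
  [InnerProductSpace ℝ F] {p q : ℝ}

theorem integrable_inner_of_memLp (hpq : p.HolderConjugate q) {D f : X → F}
    (hD : MemLp D (ENNReal.ofReal q) μ) (hf : MemLp f (ENNReal.ofReal p) μ) :
    Integrable (fun x => ⟪D x, f x⟫) μ := by
  have : (ENNReal.ofReal q).HolderConjugate (ENNReal.ofReal p) := hpq.symm.ennrealOfReal
  exact memLp_one_iff_integrable.1 ((innerSL ℝ).memLp_of_bilin 1 hD hf)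

theorem tendsto_integral_inner {ι : Type*} {l : Filter ι} (hpq : p.HolderConjugate q)
    {D f : X → F} {g : ι → X → F} (hD : MemLp D (ENNReal.ofReal q) μ)
    (hf : MemLp f (ENNReal.ofReal p) μ) (hg : ∀ k, MemLp (g k) (ENNReal.ofReal p) μ)
    (hgf : Tendsto (fun k => ∫ x, ‖g k x - f x‖ ^ p ∂μ) l (𝓝 0)) :
    Tendsto (fun k => ∫ x, ⟪D x, g k x⟫ ∂μ) l (𝓝 (∫ x, ⟪D x, f x⟫ ∂μ)) := by
  have : (ENNReal.ofReal q).HolderConjugate (ENNReal.ofReal p) := hpq.symm.ennrealOfReal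
  have hbound : ∀ k, dist (∫ x, ⟪D x, g k x⟫ ∂μ) (∫ x, ⟪D x, f x⟫ ∂μ)
      ≤ (∫ x, ‖D x‖ ^ q ∂μ) ^ (1 / q) * (∫ x, ‖g k x - f x‖ ^ p ∂μ) ^ (1 / p) := fun k => by
    rw [dist_eq_norm, ← integral_sub (integrable_inner_of_memLp hpq hD (hg k))
      (integrable_inner_of_memLp hpq hD hf)]
    refine (norm_integral_le_of_norm_le ?_ (Eventually.of_forall fun x => ?_)).trans
      (integral_mul_norm_le_Lp_mul_Lq hpq.symm hD ((hg k).sub hf))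
    · exact memLp_one_iff_integrable.1 ((hg k |>.sub hf).norm.mul hD.norm)
    · rw [← inner_sub_right]
      exact norm_inner_le_norm _ _
  refine tendsto_iff_dist_tendsto_zero.2 (squeeze_zero (fun k => dist_nonneg) hbound ?_)
  have hroot := hgf.rpow_const (p := 1 / p) (Or.inr (one_div_nonneg.2 hpq.nonneg))
  rw [Real.zero_rpow (one_div_ne_zero hpq.ne_zero)] at hroot
  simpa only [mul_zero] using hroot.const_mul ((∫ x, ‖D x‖ ^ q ∂μ) ^ (1 / q))

theorem integral_inner_le_of_tendsto {ι : Type*} {l : Filter ι} [l.NeBot]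
    (hpq : p.HolderConjugate q) {G a : X → F}
    {b : ι → X → F} (hG : MemLp G (ENNReal.ofReal q) μ)
    (hb : ∀ k, MemLp (b k) (ENNReal.ofReal p) μ)
    (hweak : Tendsto (fun k => ∫ x, ⟪G x, b k x⟫ ∂μ) l (𝓝 (∫ x, ⟪G x, a x⟫ ∂μ)))
    {r : ι → ℝ} {R : ℝ} (hr : ∀ k, ∫ x, ‖b k x‖ ^ p ∂μ ≤ r k) (hR : Tendsto r l (𝓝 R)) :
    ∫ x, ⟪G x, a x⟫ ∂μ ≤ (∫ x, ‖G x‖ ^ q ∂μ) / q + R / p := by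
  refine le_of_tendsto_of_tendsto' hweak ((hR.div_const p).const_add _) fun k => ?_
  have hGq := (integrable_norm_rpow_of_memLp hpq.symm.pos hG).div_const q
  have hbp := (integrable_norm_rpow_of_memLp hpq.pos (hb k)).div_const p
  calc ∫ x, ⟪G x, b k x⟫ ∂μ ≤ ∫ x, ‖G x‖ ^ q / q + ‖b k x‖ ^ p / p ∂μ :=
        integral_mono (integrable_inner_of_memLp hpq hG (hb k)) (hGq.add hbp) fun x =>
          inner_le_norm_rpow_div_add hpq (G x) (b k x)
    _ = (∫ x, ‖G x‖ ^ q ∂μ) / q + (∫ x, ‖b k x‖ ^ p ∂μ) / p := by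
        rw [integral_add hGq hbp, integral_div, integral_div]
    _ ≤ (∫ x, ‖G x‖ ^ q ∂μ) / q + r k / p := by
        have := hpq.pos
        gcongr
        exact hr k

theorem hasDerivAt_integral_mul_norm_add_smul_rpow (hp : 1 < p) {W : X → ℝ}
    (hW : AEStronglyMeasurable W μ) {M : ℝ} (hWM : ∀ᵐ x ∂μ, |W x| ≤ M) {a b : X → F}
    (ha : MemLp a (ENNReal.ofReal p) μ) (hb : MemLp b (ENNReal.ofReal p) μ) :
    Integrable (fun x => W x * ⟪dualityMap p (a x), b x⟫) μ ∧
      HasDerivAt (fun t : ℝ => ∫ x, W x * ‖a x + t • b x‖ ^ p ∂μ)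
        (p * ∫ x, W x * ⟪dualityMap p (a x), b x⟫ ∂μ) 0 := by
  have hp₀ : 0 < p := one_pos.trans hp
  have hline : ∀ t : ℝ, MemLp (fun x => a x + t • b x) (ENNReal.ofReal p) μ := fun t =>
    ha.add (hb.const_smul t)
  have hbound : ∀ᵐ x ∂μ, ∀ t ∈ Metric.ball (0 : ℝ) 1,
      ‖W x * (p * ⟪dualityMap p (a x + t • b x), b x⟫)‖ ≤ M * (p * ‖‖a x‖ + ‖b x‖‖ ^ p) := by
    filter_upwards [hWM] with x hx t ht
    have hinner := abs_inner_dualityMap_add_smul_le hp (a x) (b x) (mem_ball_zero_iff.1 ht).le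
    rw [norm_mul, norm_mul, Real.norm_of_nonneg hp₀.le,
      Real.norm_of_nonneg (add_nonneg (norm_nonneg (a x)) (norm_nonneg (b x)))]
    exact mul_le_mul hx (mul_le_mul_of_nonneg_left hinner hp₀.le) (by positivity)
      ((abs_nonneg _).trans hx)
  have hderiv := hasDerivAt_integral_of_dominated_loc_of_deriv_le
    (F := fun (t : ℝ) x => W x * ‖a x + t • b x‖ ^ p)
    (F' := fun (t : ℝ) x => W x * (p * ⟪dualityMap p (a x + t • b x), b x⟫))
    (Metric.ball_mem_nhds (0 : ℝ) one_pos)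
    (Eventually.of_forall fun t =>
      (integrable_mul_norm_rpow_of_memLp hp₀ hW hWM (hline t)).aestronglyMeasurable)
    (integrable_mul_norm_rpow_of_memLp hp₀ hW hWM (hline 0))
    (hW.mul ((((continuous_dualityMap hp).comp_aestronglyMeasurable (hline 0).1).inner
      hb.1).const_mul p)) hbound
    (((integrable_norm_rpow_of_memLp hp₀ (ha.norm.add hb.norm)).const_mul p).const_mul M)
    (Eventually.of_forall fun x t _ => (hasDerivAt_norm_add_smul_rpow hp (a x) (b x) t).const_mul _)
  simp only [zero_smul, add_zero, mul_left_comm _ p, integral_const_mul] at hderiv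
  exact ⟨(integrable_const_mul_iff hp₀.ne'.isUnit _).1 hderiv.1, hderiv.2⟩

end LpPairing

section LowerSemicontinuity

variable {E F : Type*} [NormedAddCommGroup E] [InnerProductSpace ℝ E] [FiniteDimensional ℝ E]
  [MeasurableSpace E] [BorelSpace E] [NormedAddCommGroup F] [InnerProductSpace ℝ F]
  [FiniteDimensional ℝ F] {μ : Measure E} [IsFiniteMeasure μ] {p q : ℝ}

theorem integral_inner_le_of_forall_contDiff (hpq : p.HolderConjugate q) {D a : E → F}
    (hD : Continuous D) (hDc : HasCompactSupport D) (ha : MemLp a (ENNReal.ofReal p) μ) {c : ℝ}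
    (hle : ∀ G : E → F, ContDiff ℝ (⊤ : ℕ∞) G → MemLp G (ENNReal.ofReal q) μ →
      ∫ x, ⟪G x, a x⟫ ∂μ ≤ (∫ x, ‖G x‖ ^ q ∂μ) / q + c) :
    ∫ x, ⟪D x, a x⟫ ∂μ ≤ (∫ x, ‖D x‖ ^ q ∂μ) / q + c := by
  have hDμ : MemLp D (ENNReal.ofReal q) μ := hD.memLp_of_hasCompactSupport hDc
  choose G hG hGD using fun j : ℕ =>
    (hDc.uniformContinuous_of_continuous hD).exists_contDiff_dist_le
      (Nat.one_div_pos_of_nat (α := ℝ) (n := j))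
  have hGle : ∀ j : ℕ, ∀ᵐ x ∂μ, ‖G j x - D x‖ ≤ 1 / ((j : ℝ) + 1) := fun j =>
    Eventually.of_forall fun x => dist_eq_norm (G j x) (D x) ▸ (hGD j x).le
  have hGμ : ∀ j, MemLp (G j) (ENNReal.ofReal q) μ := fun j => by
    have hsub : MemLp (G j - D) (ENNReal.ofReal q) μ :=
      .of_bound ((hG j).continuous.sub hD).aestronglyMeasurable _ (hGle j)
    simpa only [sub_add_cancel] using hsub.add hDμ
  have hGlim := tendsto_integral_norm_sub_rpow_of_le hpq.symm.pos
    tendsto_one_div_add_atTop_nhds_zero_nat hGle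
  have hinner : Tendsto (fun j => ∫ x, ⟪G j x, a x⟫ ∂μ) atTop (𝓝 (∫ x, ⟪D x, a x⟫ ∂μ)) := by
    simpa only [real_inner_comm] using tendsto_integral_inner hpq.symm ha hDμ hGμ hGlim
  have hnorm := tendsto_integral_norm_rpow hpq.symm.pos hDμ hGμ hGlim
  exact le_of_tendsto_of_tendsto' hinner ((hnorm.div_const q).add_const c) fun j =>
    hle (G j) (hG j) (hGμ j)

-- Young's inequality is an equality for the continuous field `dualityMap p ∘ a`, so testing with
-- smooth fields detects the `L^p` norm of the weak limit.
theorem integral_norm_rpow_le_of_tendsto_integral_inner {ι : Type*} {l : Filter ι} [l.NeBot]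
    (hp : 1 < p) {a : E → F} (ha : Continuous a) (hac : HasCompactSupport a) {b : ι → E → F}
    (hb : ∀ k, MemLp (b k) (ENNReal.ofReal p) μ)
    (hweak : ∀ G : E → F, ContDiff ℝ (⊤ : ℕ∞) G →
      Tendsto (fun k => ∫ x, ⟪G x, b k x⟫ ∂μ) l (𝓝 (∫ x, ⟪G x, a x⟫ ∂μ)))
    {r : ι → ℝ} {R : ℝ} (hr : ∀ k, ∫ x, ‖b k x‖ ^ p ∂μ ≤ r k) (hR : Tendsto r l (𝓝 R)) :
    ∫ x, ‖a x‖ ^ p ∂μ ≤ R := by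
  obtain ⟨q, hpq⟩ : ∃ q, p.HolderConjugate q := ⟨_, Real.HolderConjugate.conjExponent hp⟩
  have hD : Continuous fun x => dualityMap p (a x) := (continuous_dualityMap hp).comp ha
  have hDc : HasCompactSupport fun x => dualityMap p (a x) :=
    hac.comp_left (g := dualityMap p) dualityMap_zero
  have haμ : MemLp a (ENNReal.ofReal p) μ := ha.memLp_of_hasCompactSupport hac
  have hDμ : MemLp (fun x => dualityMap p (a x)) (ENNReal.ofReal q) μ :=
    hD.memLp_of_hasCompactSupport hDc
  have hle := integral_inner_le_of_forall_contDiff hpq hD hDc haμ fun G hG hGμ =>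
    integral_inner_le_of_tendsto hpq hGμ hb (hweak G hG) hr hR
  have heq : ∫ x, ⟪dualityMap p (a x), a x⟫ ∂μ
      = (∫ x, ‖dualityMap p (a x)‖ ^ q ∂μ) / q + (∫ x, ‖a x‖ ^ p ∂μ) / p := by
    rw [← integral_div, ← integral_div, ← integral_add
      ((integrable_norm_rpow_of_memLp hpq.symm.pos hDμ).div_const q)
      ((integrable_norm_rpow_of_memLp hpq.pos haμ).div_const p)]
    exact integral_congr_ae (Eventually.of_forall fun x =>
      inner_dualityMap_eq_norm_rpow_div_add hpq (a x))
  rw [heq, add_le_add_iff_left] at hle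
  exact (div_le_div_iff_of_pos_right hpq.pos).1 hle

end LowerSemicontinuity

section Gradient

variable {E : Type*} [NormedAddCommGroup E] [InnerProductSpace ℝ E] [CompleteSpace E]
  {f g : E → ℝ} {x : E}

theorem continuous_gradient (hf : ContDiff ℝ 1 f) : Continuous (gradient f) :=
  (InnerProductSpace.toDual ℝ E).symm.continuous.comp (hf.continuous_fderiv one_ne_zero)

theorem gradient_eq_zero_of_notMem_tsupport (hx : x ∉ tsupport f) : gradient f x = 0 := by
  rw [gradient, fderiv_of_notMem_tsupport ℝ hx, map_zero]

theorem hasCompactSupport_gradient (hf : HasCompactSupport f) : HasCompactSupport (gradient f) :=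
  (hf.fderiv ℝ).comp_left (map_zero _)

theorem norm_gradient_sub_gradient (f g : E → ℝ) (x : E) :
    ‖gradient f x - gradient g x‖ = ‖fderiv ℝ f x - fderiv ℝ g x‖ := by
  rw [gradient, gradient, ← map_sub, LinearIsometryEquiv.norm_map]

theorem gradient_add_const_mul (hf : DifferentiableAt ℝ f x) (hg : DifferentiableAt ℝ g x)
    (t : ℝ) : gradient (fun y => f y + t * g y) x = gradient f x + t • gradient g x := by
  rw [gradient, fderiv_fun_add hf (hg.const_mul t), fderiv_const_mul hg, map_add, map_smul]
  rfl

end Gradient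

section Glue

/-- The interpolation `(1 - ζ^p) u + ζ^p h`, which replaces `u` by `h` where the cutoff `ζ` is `1`.
The weight is `ζ^p` rather than `ζ` so that its gradient carries a factor `ζ^(p-1)`. -/
def glue {X : Type*} (p : ℝ) (ζ u h : X → ℝ) (x : X) : ℝ :=
  (1 - ζ x ^ p) * u x + ζ x ^ p * h x

theorem glue_of_eq_zero {X : Type*} {p : ℝ} (hp : p ≠ 0) {ζ : X → ℝ} (u h : X → ℝ) {x : X}
    (hx : ζ x = 0) : glue p ζ u h x = u x := by
  simp [glue, hx, Real.zero_rpow hp]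

theorem tsupport_glue_subset {X : Type*} [TopologicalSpace X] {p : ℝ} (hp : p ≠ 0)
    (ζ u h : X → ℝ) : tsupport (glue p ζ u h) ⊆ tsupport u ∪ tsupport ζ := by
  refine closure_minimal (fun x hx => ?_) ((isClosed_tsupport u).union (isClosed_tsupport ζ))
  by_cases hζx : ζ x = 0
  · rw [Function.mem_support, glue_of_eq_zero hp u h hζx] at hx
    exact Or.inl (subset_tsupport u hx)
  · exact Or.inr (subset_tsupport ζ hζx)

theorem norm_glue_sub_glue_le {X : Type*} {p : ℝ} (hp : 0 ≤ p) {ζ : X → ℝ} {x : X}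
    (hζ₀ : 0 ≤ ζ x) (hζ₁ : ζ x ≤ 1) (u u' h : X → ℝ) :
    ‖glue p ζ u h x - glue p ζ u' h x‖ ≤ ‖u x - u' x‖ := by
  have hsub : glue p ζ u h x - glue p ζ u' h x = (1 - ζ x ^ p) * (u x - u' x) := by
    simp only [glue]
    ring
  rw [hsub, norm_mul, Real.norm_of_nonneg (sub_nonneg.2 (Real.rpow_le_one hζ₀ hζ₁ hp))]
  exact mul_le_of_le_one_left (norm_nonneg _) (sub_le_self _ (Real.rpow_nonneg hζ₀ p))

variable {E : Type*} [NormedAddCommGroup E] [InnerProductSpace ℝ E] {p : ℝ} {ζ u h : E → ℝ}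

theorem contDiff_glue (hp : 1 ≤ p) (hζ : ContDiff ℝ 1 ζ) (hu : ContDiff ℝ 1 u)
    (hh : ContDiff ℝ 1 h) : ContDiff ℝ 1 (glue p ζ u h) := by
  have hζp : ContDiff ℝ 1 fun x => ζ x ^ p := hζ.rpow_const_of_le (m := 1) (by simpa using hp)
  exact ((contDiff_const.sub hζp).mul hu).add (hζp.mul hh)

variable [CompleteSpace E]

/-- The field `ζ ∇h + p (h - u) ∇ζ`: the only gradients that the energy of `glue p ζ u h` pays for
besides the part `(1 - ζ^p) |∇u|^p`. -/
def glueField (p : ℝ) (ζ u h : E → ℝ) (x : E) : E :=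
  ζ x • gradient h x + (p * (h x - u x)) • gradient ζ x

theorem norm_glueField_sub_glueField (hp : 0 ≤ p) (ζ u u' h : E → ℝ) (x : E) :
    ‖glueField p ζ u h x - glueField p ζ u' h x‖ = p * ‖gradient ζ x‖ * ‖u x - u' x‖ := by
  rw [glueField, glueField, add_sub_add_left_eq_sub, ← sub_smul, ← mul_sub, sub_sub_sub_cancel_left,
    norm_smul, norm_mul, Real.norm_of_nonneg hp, norm_sub_rev]
  ring

theorem continuous_glueField (p : ℝ) (hζ : ContDiff ℝ 1 ζ) (hu : Continuous u)
    (hh : ContDiff ℝ 1 h) : Continuous (glueField p ζ u h) :=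
  (hζ.continuous.smul (continuous_gradient hh)).add
    ((continuous_const.mul (hh.continuous.sub hu)).smul (continuous_gradient hζ))

theorem gradient_glue (hp : 1 ≤ p) {x : E} (hζ : DifferentiableAt ℝ ζ x)
    (hu : DifferentiableAt ℝ u x) (hh : DifferentiableAt ℝ h x) :
    gradient (glue p ζ u h) x = (1 - ζ x ^ p) • gradient u x + ζ x ^ p • gradient h x
      + ζ x ^ (p - 1) • (p * (h x - u x)) • gradient ζ x := by
  have hζp : HasFDerivAt (fun y => ζ y ^ p) ((p * ζ x ^ (p - 1)) • fderiv ℝ ζ x) x :=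
    hζ.hasFDerivAt.rpow_const (Or.inr hp)
  have hglue := ((hζp.const_sub 1).mul hu.hasFDerivAt).add (hζp.mul hh.hasFDerivAt)
  rw [gradient, HasFDerivAt.fderiv (f := glue p ζ u h) hglue]
  simp only [gradient, map_add, map_smul, map_neg, smul_smul]
  module

theorem norm_gradient_glue_rpow_le (hp : 1 < p) {x : E} (hζ₀ : 0 ≤ ζ x) (hζ₁ : ζ x ≤ 1)
    (hζ : DifferentiableAt ℝ ζ x) (hu : DifferentiableAt ℝ u x) (hh : DifferentiableAt ℝ h x) :
    ‖gradient (glue p ζ u h) x‖ ^ p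
      ≤ (1 - ζ x ^ p) * ‖gradient u x‖ ^ p + ‖glueField p ζ u h x‖ ^ p := by
  rw [gradient_glue hp.le hζ hu hh]
  exact norm_convexComb_add_smul_rpow_le hp hζ₀ hζ₁ _ _ _

end Glue

section Divergence

variable {E : Type*} [NormedAddCommGroup E] [InnerProductSpace ℝ E]

/-- The divergence of a vector field, as the trace of its derivative. -/
def divergence (G : E → E) (x : E) : ℝ :=
  LinearMap.trace ℝ E (fderiv ℝ G x)

variable {G : E → E} {w : E → ℝ} {x : E}

theorem divergence_eq_zero_of_notMem_tsupport (hx : x ∉ tsupport G) :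
    divergence G x = 0 := by
  simp [divergence, fderiv_of_notMem_tsupport ℝ hx]

theorem divergence_eq_sum_fderiv_inner {ι : Type*} [Fintype ι] (e : OrthonormalBasis ι ℝ E)
    (hG : DifferentiableAt ℝ G x) :
    divergence G x = ∑ i, fderiv ℝ (fun y => ⟪e i, G y⟫) x (e i) := by
  rw [divergence, LinearMap.trace_eq_sum_inner _ e]
  refine Finset.sum_congr rfl fun i _ => ?_
  rw [fderiv_inner_apply ℝ (differentiableAt_const _) hG]
  simp only [fderiv_fun_const, Pi.zero_apply, zero_apply, inner_zero_left, add_zero,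
    ContinuousLinearMap.coe_coe]

variable [FiniteDimensional ℝ E]

theorem continuous_divergence (hG : ContDiff ℝ 1 G) : Continuous (divergence G) :=
  (LinearMap.continuous_of_finiteDimensional
    (LinearMap.trace ℝ E ∘ₗ ContinuousLinearMap.coeLM ℝ)).comp (hG.continuous_fderiv one_ne_zero)

variable [MeasurableSpace E] [BorelSpace E] {μ : Measure E} [μ.IsAddHaarMeasure]

theorem integral_inner_gradient_eq_neg_integral_divergence_mul (hG : ContDiff ℝ 1 G)
    (hGc : HasCompactSupport G) (hw : ContDiff ℝ 1 w) :
    ∫ x, ⟪G x, gradient w x⟫ ∂μ = -∫ x, divergence G x * w x ∂μ := by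
  set e := stdOrthonormalBasis ℝ E
  have hcoord : ∀ i, ContDiff ℝ 1 fun x => ⟪e i, G x⟫ := fun i => contDiff_const.inner ℝ hG
  have hcoordc : ∀ i, HasCompactSupport fun x => ⟪e i, G x⟫ := fun i =>
    hGc.comp_left (inner_zero_right _)
  have hint₁ : ∀ i, Integrable (fun x => ⟪e i, G x⟫ * fderiv ℝ w x (e i)) μ := fun i =>
    ((hcoord i).continuous.mul ((hw.continuous_fderiv one_ne_zero).clm_apply
      continuous_const)).integrable_of_hasCompactSupport (hcoordc i).mul_right
  have hint₂ : ∀ i, Integrable (fun x => fderiv ℝ (fun y => ⟪e i, G y⟫) x (e i) * w x) μ :=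
    fun i => ((((hcoord i).continuous_fderiv one_ne_zero).clm_apply continuous_const).mul
      hw.continuous).integrable_of_hasCompactSupport
        ((hcoordc i).fderiv_apply (𝕜 := ℝ) (e i)).mul_right
  have hparts : ∀ i, ∫ x, ⟪e i, G x⟫ * fderiv ℝ w x (e i) ∂μ
      = -∫ x, fderiv ℝ (fun y => ⟪e i, G y⟫) x (e i) * w x ∂μ := fun i =>
    integral_mul_fderiv_eq_neg_fderiv_mul_of_integrable (hint₂ i) (hint₁ i)
      (((hcoord i).continuous.mul hw.continuous).integrable_of_hasCompactSupport
        (hcoordc i).mul_right)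
      (fun x _ => (hcoord i).differentiable one_ne_zero x)
      fun x _ => hw.differentiable one_ne_zero x
  calc ∫ x, ⟪G x, gradient w x⟫ ∂μ = ∫ x, ∑ i, ⟪e i, G x⟫ * fderiv ℝ w x (e i) ∂μ := by
        congr with x
        rw [← e.sum_inner_mul_inner]
        refine Finset.sum_congr rfl fun i _ => ?_
        rw [real_inner_comm, inner_gradient_right, conj_trivial]
    _ = ∑ i, ∫ x, ⟪e i, G x⟫ * fderiv ℝ w x (e i) ∂μ := integral_finsetSum _ fun i _ => hint₁ i
    _ = -∑ i, ∫ x, fderiv ℝ (fun y => ⟪e i, G y⟫) x (e i) * w x ∂μ := by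
        simp only [hparts, Finset.sum_neg_distrib]
    _ = -∫ x, divergence G x * w x ∂μ := by
        rw [← integral_finsetSum _ fun i _ => hint₂ i]
        congr with x
        rw [← Finset.sum_mul,
          ← divergence_eq_sum_fderiv_inner e (hG.differentiable one_ne_zero x)]

theorem setIntegral_inner_smul_gradient_eq (hG : ContDiff ℝ 1 G) {ζ : E → ℝ} (hζ : ContDiff ℝ 1 ζ)
    (hζc : HasCompactSupport ζ) (hw : ContDiff ℝ 1 w) :
    ∫ x in tsupport ζ, ⟪G x, ζ x • gradient w x⟫ ∂μ
      = -∫ x in tsupport ζ, divergence (fun y => ζ y • G y) x * w x ∂μ := by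
  have hsub : tsupport (fun y => ζ y • G y) ⊆ tsupport ζ := tsupport_smul_subset_left ζ G
  rw [setIntegral_eq_integral_of_forall_compl_eq_zero fun x hx => ?_,
    setIntegral_eq_integral_of_forall_compl_eq_zero fun x hx => ?_,
    ← integral_inner_gradient_eq_neg_integral_divergence_mul (hζ.fun_smul hG) hζc.smul_right hw]
  · simp only [real_inner_smul_left, real_inner_smul_right]
  · rw [divergence_eq_zero_of_notMem_tsupport fun hx' => hx (hsub hx'), zero_mul]
  · rw [image_eq_zero_of_notMem_tsupport hx, zero_smul, inner_zero_right]

end Divergence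

section Mollification

open scoped Convolution

variable {E F : Type*} [NormedAddCommGroup E] [NormedSpace ℝ E] [FiniteDimensional ℝ E]
  [HasContDiffBump E] [MeasurableSpace E] [BorelSpace E] {μ : Measure E} [μ.IsAddHaarMeasure]
  [NormedAddCommGroup F] [NormedSpace ℝ F] {f : E → F}

theorem tsupport_normed_convolution_subset (φ : ContDiffBump (0 : E)) :
    tsupport (φ.normed μ ⋆[ContinuousLinearMap.lsmul ℝ ℝ, μ] f)
      ⊆ Metric.cthickening φ.rOut (tsupport f) := by
  refine closure_minimal ((support_convolution_subset_swap _).trans ?_) Metric.isClosed_cthickening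
  rw [φ.support_normed_eq]
  rintro _ ⟨a, ha, b, hb, rfl⟩
  refine Metric.mem_cthickening_of_dist_le _ a _ _ (subset_tsupport f ha) ?_
  simpa only [dist_self_add_left] using (mem_ball_zero_iff.1 hb).le

theorem fderiv_normed_convolution (φ : ContDiffBump (0 : E)) (hf : ContDiff ℝ 1 f)
    (hfc : HasCompactSupport f) (x : E) :
    fderiv ℝ (φ.normed μ ⋆[ContinuousLinearMap.lsmul ℝ ℝ, μ] f) x
      = (φ.normed μ ⋆[ContinuousLinearMap.lsmul ℝ ℝ, μ] fderiv ℝ f) x :=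
  (hfc.hasFDerivAt_convolution_right (ContinuousLinearMap.lsmul ℝ ℝ : ℝ →L[ℝ] F →L[ℝ] F)
    φ.continuous_normed.locallyIntegrable hf x).fderiv

theorem exists_contDiff_dist_fderiv_le [CompleteSpace F] (hf : ContDiff ℝ 1 f)
    (hfc : HasCompactSupport f) {ε : ℝ} (hε : 0 < ε) :
    ∃ g : E → F, ContDiff ℝ (⊤ : ℕ∞) g ∧ tsupport g ⊆ Metric.cthickening ε (tsupport f) ∧
      (∀ x, dist (g x) (f x) ≤ ε) ∧ ∀ x, dist (fderiv ℝ g x) (fderiv ℝ f x) ≤ ε := by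
  have hdf : Continuous (fderiv ℝ f) := hf.continuous_fderiv one_ne_zero
  obtain ⟨δ₁, hδ₁, hball₁⟩ := Metric.uniformContinuous_iff.1
    (hfc.uniformContinuous_of_continuous hf.continuous) ε hε
  obtain ⟨δ₂, hδ₂, hball₂⟩ := Metric.uniformContinuous_iff.1
    ((hfc.fderiv ℝ).uniformContinuous_of_continuous hdf) ε hε
  set δ := min ε (min δ₁ δ₂)
  have hδ : 0 < δ := lt_min hε (lt_min hδ₁ hδ₂)
  let φ : ContDiffBump (0 : E) := ⟨δ / 2, δ, half_pos hδ, half_lt_self hδ⟩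
  refine ⟨φ.normed .addHaar ⋆[ContinuousLinearMap.lsmul ℝ ℝ, .addHaar] f,
    φ.hasCompactSupport_normed.contDiff_convolution_left _ φ.contDiff_normed
      hf.continuous.locallyIntegrable,
    (tsupport_normed_convolution_subset φ).trans (Metric.cthickening_mono (min_le_left _ _) _),
    fun x => φ.dist_normed_convolution_le hf.continuous.aestronglyMeasurable fun y hy =>
      (hball₁ (hy.trans_le ((min_le_right _ _).trans (min_le_left _ _)))).le, fun x => ?_⟩
  rw [fderiv_normed_convolution φ hf hfc]
  exact φ.dist_normed_convolution_le hdf.aestronglyMeasurable fun y hy =>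
    (hball₂ (hy.trans_le ((min_le_right _ _).trans (min_le_right _ _)))).le

end Mollification

section TestFunctions

variable {d : ℕ} {Ω K : Set (Euc d)} {p : ℝ} {u v ζ h : Euc d → ℝ}

/-- A `C¹` test function on `Ω`. Gluing test functions with weights `ζ ^ p` produces functions of
this class, which need not be smooth. -/
def IsC1TestFun (Ω : Set (Euc d)) (u : Euc d → ℝ) : Prop :=
  ContDiff ℝ 1 u ∧ HasCompactSupport u ∧ tsupport u ⊆ Ω

theorem IsTestFun.isC1TestFun (hu : IsTestFun Ω u) : IsC1TestFun Ω u :=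
  ⟨hu.1.of_le (by simp), hu.2⟩

theorem IsC1TestFun.glue (hp : 1 ≤ p) (hζ : IsC1TestFun Ω ζ) (hu : IsC1TestFun Ω u)
    (hh : ContDiff ℝ 1 h) : IsC1TestFun Ω (glue p ζ u h) := by
  have hsub := tsupport_glue_subset (one_pos.trans_le hp).ne' ζ u h
  exact ⟨contDiff_glue hp hζ.1 hu.1 hh,
    (hu.2.1.isCompact.union hζ.2.1.isCompact).of_isClosed_subset (isClosed_tsupport _) hsub,
    hsub.trans (Set.union_subset hu.2.2 hζ.2.2)⟩

theorem exists_isTestFun_eventually_eq_one (hK : IsCompact K) (hΩ : IsOpen Ω) (hKΩ : K ⊆ Ω) :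
    ∃ ζ : Euc d → ℝ, IsTestFun Ω ζ ∧ (∀ x, 0 ≤ ζ x) ∧ (∀ x, ζ x ≤ 1) ∧
      ∀ᶠ x in 𝓝ˢ K, ζ x = 1 := by
  obtain ⟨L, hL, hKL, hLΩ⟩ := exists_compact_between hK hΩ hKΩ
  obtain ⟨ζ, hζ, hζL, hζ01⟩ := exists_contMDiffMap_one_nhds_of_subset_interior
    (n := (⊤ : ℕ∞)) (modelWithCornersSelf ℝ (Euc d)) hK.isClosed hKL
  have hsub : tsupport ζ ⊆ L :=
    closure_minimal (fun x hx => not_not.1 fun hxL => hx (hζL x hxL)) hL.isClosed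
  exact ⟨ζ, ⟨ζ.contMDiff.contDiff, hL.of_isClosed_subset (isClosed_tsupport _) hsub,
    hsub.trans hLΩ⟩, fun x => (hζ01 x).1, fun x => (hζ01 x).2, hζ⟩

theorem exists_isC1TestFun_eventuallyEq (hK : IsCompact K) (hΩ : IsOpen Ω) (hKΩ : K ⊆ Ω)
    (hv : ContDiffOn ℝ 1 v Ω) : ∃ f, IsC1TestFun Ω f ∧ f =ᶠ[𝓝ˢ K] v := by
  obtain ⟨χ, hχ, -, -, hχK⟩ := exists_isTestFun_eventually_eq_one hK hΩ hKΩ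
  have hsub : tsupport (fun x => χ x * v x) ⊆ tsupport χ := tsupport_mul_subset_left
  refine ⟨fun x => χ x * v x, ⟨contDiff_iff_contDiffAt.2 fun x => ?_, hχ.2.1.mul_right,
    hsub.trans hχ.2.2⟩, hχK.mono fun x hx => by simp only [hx, one_mul]⟩
  by_cases hx : x ∈ tsupport χ
  · exact hχ.isC1TestFun.1.contDiffAt.mul (hv.contDiffAt (hΩ.mem_nhds (hχ.2.2 hx)))
  · exact contDiffAt_const.congr_of_eventuallyEq
      (notMem_tsupport_iff_eventuallyEq.1 fun hx' => hx (hsub hx'))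

theorem IsC1TestFun.exists_isTestFun_norm_sub_le (hu : IsC1TestFun Ω u) (hΩ : IsOpen Ω) :
    ∃ K, IsCompact K ∧ K ⊆ Ω ∧ tsupport u ⊆ K ∧ ∀ ε > 0, ∃ g, IsTestFun Ω g ∧ tsupport g ⊆ K ∧
      (∀ x, ‖g x - u x‖ ≤ ε) ∧ ∀ x, ‖gradient g x - gradient u x‖ ≤ ε := by
  obtain ⟨δ, hδ, hδΩ⟩ := hu.2.1.isCompact.exists_cthickening_subset_open hΩ hu.2.2
  have hK : IsCompact (Metric.cthickening δ (tsupport u)) := hu.2.1.isCompact.cthickening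
  refine ⟨_, hK, hδΩ, Metric.self_subset_cthickening _, fun ε hε => ?_⟩
  obtain ⟨g, hg, hgs, hgu, hdgu⟩ := exists_contDiff_dist_fderiv_le hu.1 hu.2.1 (lt_min hε hδ)
  have hgK : tsupport g ⊆ Metric.cthickening δ (tsupport u) :=
    hgs.trans (Metric.cthickening_mono (min_le_right _ _) _)
  refine ⟨g, ⟨hg, hK.of_isClosed_subset (isClosed_tsupport _) hgK, hgK.trans hδΩ⟩, hgK,
    fun x => ?_, fun x => ?_⟩
  · exact (dist_eq_norm (g x) (u x) ▸ hgu x).trans (min_le_left _ _)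
  · rw [norm_gradient_sub_gradient, ← dist_eq_norm]
    exact (hdgu x).trans (min_le_left _ _)

end TestFunctions

section Energy

variable {d : ℕ} {Ω S : Set (Euc d)} {p : ℝ} {V u ζ h : Euc d → ℝ}

theorem LocBddPotential.exists_ae_abs_le (hV : LocBddPotential Ω V) (hS : IsCompact S)
    (hSΩ : S ⊆ Ω) : ∃ M, ∀ᵐ x ∂volume.restrict S, |V x| ≤ M :=
  (hV.2 S hSΩ hS).imp fun _ hM => ae_restrict_of_forall_mem hS.measurableSet hM

theorem energyQ_eq_of_tsupport_subset (hΩ : MeasurableSet Ω) (hp : p ≠ 0) (hSΩ : S ⊆ Ω)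
    (hu : tsupport u ⊆ S) : energyQ Ω V p u = energyQ S V p u := by
  refine setIntegral_eq_of_subset_of_forall_sdiff_eq_zero hΩ hSΩ fun x hx => ?_
  have hxu : x ∉ tsupport u := fun hxu => hx.2 (hu hxu)
  simp [gradient_eq_zero_of_notMem_tsupport hxu, image_eq_zero_of_notMem_tsupport hxu,
    Real.zero_rpow hp]

theorem integrableOn_norm_gradient_rpow (hp : 0 < p) (hS : IsCompact S) (hu : ContDiff ℝ 1 u) :
    IntegrableOn (fun x => ‖gradient u x‖ ^ p) S :=
  integrable_norm_rpow_of_memLp hp (memLp_restrict_of_isCompact (continuous_gradient hu) hS _)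

theorem LocBddPotential.integrableOn_mul_abs_rpow (hV : LocBddPotential Ω V) (hp : 0 < p)
    (hS : IsCompact S) (hSΩ : S ⊆ Ω) (hu : Continuous u) :
    IntegrableOn (fun x => V x * |u x| ^ p) S :=
  have ⟨_, hM⟩ := hV.exists_ae_abs_le hS hSΩ
  integrable_mul_norm_rpow_of_memLp hp hV.1.aestronglyMeasurable hM
    (memLp_restrict_of_isCompact hu hS _)

theorem LocBddPotential.energyQ_eq_add (hV : LocBddPotential Ω V) (hp : 0 < p) (hS : IsCompact S)
    (hSΩ : S ⊆ Ω) (hu : ContDiff ℝ 1 u) :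
    energyQ S V p u = (∫ x in S, ‖gradient u x‖ ^ p) + ∫ x in S, V x * |u x| ^ p :=
  integral_add (integrableOn_norm_gradient_rpow hp hS hu)
    (hV.integrableOn_mul_abs_rpow hp hS hSΩ hu.continuous)

theorem LocBddPotential.tendsto_energyQ {ι : Type*} {l : Filter ι} (hV : LocBddPotential Ω V)
    (hp : 0 < p) (hS : IsCompact S) (hSΩ : S ⊆ Ω) (hu : ContDiff ℝ 1 u) {g : ι → Euc d → ℝ}
    (hg : ∀ k, ContDiff ℝ 1 (g k)) {ε : ι → ℝ} (hε : Tendsto ε l (𝓝 0))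
    (hgu : ∀ k x, ‖g k x - u x‖ ≤ ε k) (hdgu : ∀ k x, ‖gradient (g k) x - gradient u x‖ ≤ ε k) :
    Tendsto (fun k => energyQ S V p (g k)) l (𝓝 (energyQ S V p u)) := by
  have : IsFiniteMeasure (volume.restrict S) := isFiniteMeasure_restrict.2 hS.measure_lt_top.ne
  obtain ⟨M, hM⟩ := hV.exists_ae_abs_le hS hSΩ
  have hmem {F : Type} [NormedAddCommGroup F] {f : Euc d → F} (hf : Continuous f) :
      MemLp f (ENNReal.ofReal p) (volume.restrict S) := memLp_restrict_of_isCompact hf hS _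
  simp only [hV.energyQ_eq_add hp hS hSΩ, hu, hg]
  exact (tendsto_integral_norm_rpow hp (hmem (continuous_gradient hu))
    (fun k => hmem (continuous_gradient (hg k))) (tendsto_integral_norm_sub_rpow_of_le hp hε
      fun k => .of_forall (hdgu k))).add
    (tendsto_integral_mul_norm_rpow hp hV.1.aestronglyMeasurable hM (hmem hu.continuous)
      (fun k => hmem (hg k).continuous) (tendsto_integral_norm_sub_rpow_of_le hp hε
        fun k => .of_forall (hgu k)))

theorem energyQ_nonneg_of_isC1TestFun (hΩ : IsOpen Ω) (hp : 0 < p) (hV : LocBddPotential Ω V)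
    (hQ : ∀ u, IsTestFun Ω u → 0 ≤ energyQ Ω V p u) (hu : IsC1TestFun Ω u) :
    0 ≤ energyQ Ω V p u := by
  obtain ⟨K, hK, hKΩ, huK, happrox⟩ := hu.exists_isTestFun_norm_sub_le hΩ
  choose g hg hgK hgu hdgu using fun k : ℕ => happrox (1 / (k + 1)) Nat.one_div_pos_of_nat
  rw [energyQ_eq_of_tsupport_subset hΩ.measurableSet hp.ne' hKΩ huK]
  refine ge_of_tendsto' (hV.tendsto_energyQ hp hK hKΩ hu.1 (fun k => (hg k).isC1TestFun.1)
    tendsto_one_div_add_atTop_nhds_zero_nat hgu hdgu) fun k => ?_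
  rw [← energyQ_eq_of_tsupport_subset hΩ.measurableSet hp.ne' hKΩ (hgK k)]
  exact hQ _ (hg k)

theorem IsC1TestFun.integrableOn_energy (hu : IsC1TestFun Ω u) (hp : 0 < p) (hΩ : MeasurableSet Ω)
    (hV : LocBddPotential Ω V) :
    IntegrableOn (fun x => ‖gradient u x‖ ^ p + V x * |u x| ^ p) Ω := by
  refine ((integrableOn_norm_gradient_rpow hp hu.2.1 hu.1).add
    (hV.integrableOn_mul_abs_rpow hp hu.2.1 hu.2.2 hu.1.continuous)).of_forall_sdiff_eq_zero hΩ
      fun x hx => ?_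
  simp [gradient_eq_zero_of_notMem_tsupport hx.2, image_eq_zero_of_notMem_tsupport hx.2,
    Real.zero_rpow hp.ne']

theorem energyQ_glue_sub_energyQ (hΩ : MeasurableSet Ω) (hp : 1 ≤ p) (hV : LocBddPotential Ω V)
    (hζ : IsC1TestFun Ω ζ) (hu : IsC1TestFun Ω u) (hh : ContDiff ℝ 1 h) :
    energyQ Ω V p (glue p ζ u h) - energyQ Ω V p u
      = energyQ (tsupport ζ) V p (glue p ζ u h) - energyQ (tsupport ζ) V p u := by
  have hp₀ : 0 < p := one_pos.trans_le hp
  have hwi := (hζ.glue hp hu hh).integrableOn_energy hp₀ hΩ hV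
  have hui := hu.integrableOn_energy hp₀ hΩ hV
  simp only [energyQ]
  rw [← integral_sub hwi hui, ← integral_sub (hwi.mono_set hζ.2.2) (hui.mono_set hζ.2.2)]
  refine setIntegral_eq_of_subset_of_forall_sdiff_eq_zero hΩ hζ.2.2 fun x hx => ?_
  have heq : glue p ζ u h =ᶠ[𝓝 x] u := (notMem_tsupport_iff_eventuallyEq.1 hx.2).mono fun y hy =>
    glue_of_eq_zero hp₀.ne' u h hy
  rw [heq.gradient_eq, heq.eq_of_nhds, sub_self]

end Energy

section Minimality

variable {d : ℕ} {Ω : Set (Euc d)} {p : ℝ} {V u f ζ h : Euc d → ℝ}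

theorem setIntegral_norm_gradient_glue_rpow_add_le {S : Set (Euc d)} (hS : IsCompact S)
    (hp : 1 < p) (hζ : ContDiff ℝ 1 ζ) (hζ₀ : ∀ x, 0 ≤ ζ x) (hζ₁ : ∀ x, ζ x ≤ 1)
    (hu : ContDiff ℝ 1 u) (hh : ContDiff ℝ 1 h) :
    (∫ x in S, ‖gradient (glue p ζ u h) x‖ ^ p) + (∫ x in S, ‖ζ x • gradient u x‖ ^ p)
      ≤ (∫ x in S, ‖gradient u x‖ ^ p) + ∫ x in S, ‖glueField p ζ u h x‖ ^ p := by
  have hint {a : Euc d → Euc d} (ha : Continuous a) : IntegrableOn (fun x => ‖a x‖ ^ p) S :=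
    integrable_norm_rpow_of_memLp (one_pos.trans hp) (memLp_restrict_of_isCompact ha hS _)
  have hdw := hint (continuous_gradient (contDiff_glue hp.le hζ hu hh))
  have hdu := continuous_gradient hu
  have hζdu : IntegrableOn (fun x => ‖ζ x • gradient u x‖ ^ p) S :=
    hint (hζ.continuous.smul hdu)
  have hfield := hint (continuous_glueField p hζ hu.continuous hh)
  rw [← integral_add hdw hζdu, ← integral_add (hint hdu) hfield]
  refine integral_mono (hdw.add hζdu) ((hint hdu).add hfield) fun x => ?_
  have hpoint := norm_gradient_glue_rpow_le hp (hζ₀ x) (hζ₁ x)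
    (hζ.differentiable one_ne_zero x) (hu.differentiable one_ne_zero x)
    (hh.differentiable one_ne_zero x)
  simp only [norm_smul, Real.norm_of_nonneg (hζ₀ x), Real.mul_rpow (hζ₀ x) (norm_nonneg _)]
  linarith

theorem integral_norm_smul_gradient_rpow_le (hΩ : IsOpen Ω) (hp : 1 < p)
    (hV : LocBddPotential Ω V) (hQ : ∀ u, IsTestFun Ω u → 0 ≤ energyQ Ω V p u)
    (hζ : IsC1TestFun Ω ζ) (hζ₀ : ∀ x, 0 ≤ ζ x) (hζ₁ : ∀ x, ζ x ≤ 1) (hu : IsC1TestFun Ω u)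
    (hh : ContDiff ℝ 1 h) :
    ∫ x in tsupport ζ, ‖ζ x • gradient u x‖ ^ p
      ≤ energyQ Ω V p u + (∫ x in tsupport ζ, ‖glueField p ζ u h x‖ ^ p)
        + (∫ x in tsupport ζ, V x * |glue p ζ u h x| ^ p)
        - ∫ x in tsupport ζ, V x * |u x| ^ p := by
  have hp₀ : 0 < p := one_pos.trans hp
  have hw : IsC1TestFun Ω (glue p ζ u h) := hζ.glue hp.le hu hh
  have hsub := energyQ_glue_sub_energyQ hΩ.measurableSet hp.le hV hζ hu hh
  rw [hV.energyQ_eq_add hp₀ hζ.2.1 hζ.2.2 hw.1, hV.energyQ_eq_add hp₀ hζ.2.1 hζ.2.2 hu.1] at hsub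
  linarith [energyQ_nonneg_of_isC1TestFun hΩ hp₀ hV hQ hw,
    setIntegral_norm_gradient_glue_rpow_add_le hζ.2.1 hp hζ.1 hζ₀ hζ₁ hu.1 hh]

variable {ι : Type*} {l : Filter ι} {g : ι → Euc d → ℝ}

theorem tendsto_setIntegral_inner_smul_gradient (hp : 1 < p) (hζ : ContDiff ℝ 1 ζ)
    (hζc : HasCompactSupport ζ) (hf : ContDiff ℝ 1 f) (hg : ∀ k, ContDiff ℝ 1 (g k))
    (hgf : Tendsto (fun k => ∫ x in tsupport ζ, ‖g k x - f x‖ ^ p) l (𝓝 0))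
    {G : Euc d → Euc d} (hG : ContDiff ℝ 1 G) :
    Tendsto (fun k => ∫ x in tsupport ζ, ⟪G x, ζ x • gradient (g k) x⟫) l
      (𝓝 (∫ x in tsupport ζ, ⟪G x, ζ x • gradient f x⟫)) := by
  have hmem {F : Type} [NormedAddCommGroup F] {a : Euc d → F} (ha : Continuous a) (r : ENNReal) :
      MemLp a r (volume.restrict (tsupport ζ)) := memLp_restrict_of_isCompact ha hζc r
  have hdiv : Continuous (divergence fun y => ζ y • G y) := continuous_divergence (hζ.smul hG)
  simp only [setIntegral_inner_smul_gradient_eq hG hζ hζc, hf, hg]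
  simpa only [Real.inner_apply] using (tendsto_integral_inner
    (Real.HolderConjugate.conjExponent hp) (hmem hdiv _) (hmem hf.continuous _)
    (fun k => hmem (hg k).continuous _) hgf).neg

theorem tendsto_setIntegral_norm_glueField_rpow (hp : 0 < p) (hζ : ContDiff ℝ 1 ζ)
    (hζc : HasCompactSupport ζ) (hf : Continuous f) (hg : ∀ k, Continuous (g k))
    (hgf : Tendsto (fun k => ∫ x in tsupport ζ, ‖g k x - f x‖ ^ p) l (𝓝 0))
    (hh : ContDiff ℝ 1 h) :
    Tendsto (fun k => ∫ x in tsupport ζ, ‖glueField p ζ (g k) h x‖ ^ p) l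
      (𝓝 (∫ x in tsupport ζ, ‖glueField p ζ f h x‖ ^ p)) := by
  have hmem {F : Type} [NormedAddCommGroup F] {a : Euc d → F} (ha : Continuous a) :
      MemLp a (ENNReal.ofReal p) (volume.restrict (tsupport ζ)) :=
    memLp_restrict_of_isCompact ha hζc _
  obtain ⟨C, hC⟩ :=
    (hasCompactSupport_gradient hζc).exists_bound_of_continuous (continuous_gradient hζ)
  have hC₀ : 0 ≤ C := (norm_nonneg _).trans (hC 0)
  refine tendsto_integral_norm_rpow hp (hmem (continuous_glueField p hζ hf hh))
    (fun k => hmem (continuous_glueField p hζ (hg k) hh))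
    (tendsto_integral_norm_sub_rpow_of_le_mul hp (hmem hf) (fun k => hmem (hg k)) hgf
      (M := p * C) (by positivity) fun k => .of_forall fun x => ?_)
  rw [norm_glueField_sub_glueField hp.le]
  gcongr
  exact hC x

theorem LocBddPotential.tendsto_setIntegral_mul_abs_glue_rpow (hV : LocBddPotential Ω V)
    (hp : 1 ≤ p) (hζ : IsC1TestFun Ω ζ) (hζ₀ : ∀ x, 0 ≤ ζ x) (hζ₁ : ∀ x, ζ x ≤ 1)
    (hf : ContDiff ℝ 1 f) (hg : ∀ k, ContDiff ℝ 1 (g k))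
    (hgf : Tendsto (fun k => ∫ x in tsupport ζ, ‖g k x - f x‖ ^ p) l (𝓝 0))
    (hh : ContDiff ℝ 1 h) :
    Tendsto (fun k => ∫ x in tsupport ζ, V x * |glue p ζ (g k) h x| ^ p) l
      (𝓝 (∫ x in tsupport ζ, V x * |glue p ζ f h x| ^ p)) := by
  have hp₀ : 0 < p := one_pos.trans_le hp
  have hmem {a : Euc d → ℝ} (ha : ContDiff ℝ 1 a) :
      MemLp a (ENNReal.ofReal p) (volume.restrict (tsupport ζ)) :=
    memLp_restrict_of_isCompact ha.continuous hζ.2.1 _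
  obtain ⟨M, hM⟩ := hV.exists_ae_abs_le hζ.2.1 hζ.2.2
  refine tendsto_integral_mul_norm_rpow hp₀ hV.1.aestronglyMeasurable hM
    (hmem (contDiff_glue hp hζ.1 hf hh)) (fun k => hmem (contDiff_glue hp hζ.1 (hg k) hh))
    (tendsto_integral_norm_sub_rpow_of_le_mul hp₀ (hmem hf) (fun k => hmem (hg k)) hgf
      zero_le_one fun k => .of_forall fun x => ?_)
  rw [one_mul]
  exact norm_glue_sub_glue_le hp₀.le (hζ₀ x) (hζ₁ x) _ _ _

theorem integral_norm_smul_gradient_rpow_add_le_of_tendsto [l.NeBot] (hΩ : IsOpen Ω) (hp : 1 < p)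
    (hV : LocBddPotential Ω V) (hQ : ∀ u, IsTestFun Ω u → 0 ≤ energyQ Ω V p u)
    (hζ : IsC1TestFun Ω ζ) (hζ₀ : ∀ x, 0 ≤ ζ x) (hζ₁ : ∀ x, ζ x ≤ 1)
    (hg : ∀ k, IsC1TestFun Ω (g k)) (hgQ : Tendsto (fun k => energyQ Ω V p (g k)) l (𝓝 0))
    (hf : ContDiff ℝ 1 f)
    (hgf : Tendsto (fun k => ∫ x in tsupport ζ, ‖g k x - f x‖ ^ p) l (𝓝 0))
    (hh : ContDiff ℝ 1 h) :
    (∫ x in tsupport ζ, ‖ζ x • gradient f x‖ ^ p) + (∫ x in tsupport ζ, V x * |f x| ^ p)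
      ≤ (∫ x in tsupport ζ, ‖glueField p ζ f h x‖ ^ p)
        + ∫ x in tsupport ζ, V x * |glue p ζ f h x| ^ p := by
  have hp₀ : 0 < p := one_pos.trans hp
  have hS : IsCompact (tsupport ζ) := hζ.2.1
  have : IsFiniteMeasure (volume.restrict (tsupport ζ)) :=
    isFiniteMeasure_restrict.2 hS.measure_lt_top.ne
  obtain ⟨M, hM⟩ := hV.exists_ae_abs_le hS hζ.2.2
  have hmem {F : Type} [NormedAddCommGroup F] {a : Euc d → F} (ha : Continuous a) :
      MemLp a (ENNReal.ofReal p) (volume.restrict (tsupport ζ)) :=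
    memLp_restrict_of_isCompact ha hS _
  have hgC : ∀ k, ContDiff ℝ 1 (g k) := fun k => (hg k).1
  have hζdw : ∀ {w}, ContDiff ℝ 1 w → Continuous fun x => ζ x • gradient w x := fun hw =>
    hζ.1.continuous.smul (continuous_gradient hw)
  have hζdfc : HasCompactSupport fun x => ζ x • gradient f x := hζ.2.1.smul_right
  have hweak : ∀ G : Euc d → Euc d, ContDiff ℝ (⊤ : ℕ∞) G →
      Tendsto (fun k => ∫ x in tsupport ζ, ⟪G x, ζ x • gradient (g k) x⟫) l
        (𝓝 (∫ x in tsupport ζ, ⟪G x, ζ x • gradient f x⟫)) := fun G hG =>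
    tendsto_setIntegral_inner_smul_gradient hp hζ.1 hζ.2.1 hf hgC hgf (hG.of_le (by simp))
  have hfield := tendsto_setIntegral_norm_glueField_rpow hp₀ hζ.1 hS hf.continuous
    (fun k => (hgC k).continuous) hgf hh
  have hVglue := hV.tendsto_setIntegral_mul_abs_glue_rpow hp.le hζ hζ₀ hζ₁ hf hgC hgf hh
  have hVg := tendsto_integral_mul_norm_rpow hp₀ hV.1.aestronglyMeasurable hM
    (hmem hf.continuous) (fun k => hmem (hgC k).continuous) hgf
  have hlsc := integral_norm_rpow_le_of_tendsto_integral_inner hp (hζdw hf) hζdfc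
    (fun k => hmem (hζdw (hgC k))) hweak
    (fun k => integral_norm_smul_gradient_rpow_le hΩ hp hV hQ hζ hζ₀ hζ₁ (hg k) hh)
    (((hgQ.add hfield).add hVglue).sub hVg)
  simp only [Real.norm_eq_abs] at hlsc
  linarith

end Minimality

section EulerLagrange

theorem integral_inner_dualityMap_add_eq_zero_of_forall_le {X F : Type*} [MeasurableSpace X]
    {μ : Measure X} [NormedAddCommGroup F] [InnerProductSpace ℝ F] {p : ℝ} (hp : 1 < p)
    {W : X → ℝ} (hW : AEStronglyMeasurable W μ) {M : ℝ} (hWM : ∀ᵐ x ∂μ, |W x| ≤ M)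
    {a b : X → F} (ha : MemLp a (ENNReal.ofReal p) μ) (hb : MemLp b (ENNReal.ofReal p) μ)
    {f φ : X → ℝ} (hf : MemLp f (ENNReal.ofReal p) μ) (hφ : MemLp φ (ENNReal.ofReal p) μ)
    (hmin : ∀ t : ℝ, (∫ x, ‖a x‖ ^ p ∂μ) + (∫ x, W x * |f x| ^ p ∂μ)
      ≤ (∫ x, ‖a x + t • b x‖ ^ p ∂μ) + ∫ x, W x * |f x + t * φ x| ^ p ∂μ) :
    ∫ x, (⟪dualityMap p (a x), b x⟫ + W x * (dualityMap p (f x) * φ x)) ∂μ = 0 := by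
  obtain ⟨hia, hda⟩ := hasDerivAt_integral_mul_norm_add_smul_rpow hp
    (aestronglyMeasurable_const (b := (1 : ℝ))) (.of_forall fun _ => abs_one.le) ha hb
  obtain ⟨hif, hdf⟩ := hasDerivAt_integral_mul_norm_add_smul_rpow hp hW hWM hf hφ
  simp only [one_mul, Real.inner_apply, Real.norm_eq_abs, smul_eq_mul] at hia hda hif hdf
  have hcrit := IsLocalMin.hasDerivAt_eq_zero (.of_forall fun t => ?_) (hda.add hdf)
  · rw [← mul_add, ← integral_add hia hif] at hcrit
    exact (mul_eq_zero.1 hcrit).resolve_left (by linarith)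
  · simpa using hmin t

theorem glue_add_const_mul {X : Type*} [TopologicalSpace X] (p : ℝ) {ζ φ : X → ℝ}
    (hζφ : ∀ᶠ x in 𝓝ˢ (tsupport φ), ζ x = 1) (f : X → ℝ) (t : ℝ) (x : X) :
    glue p ζ f (fun y => f y + t * φ y) x = f x + t * φ x := by
  by_cases hx : x ∈ tsupport φ
  · simp [glue, hζφ.self_of_nhdsSet x hx]
  · simp only [glue, image_eq_zero_of_notMem_tsupport hx]
    ring

theorem glueField_add_const_mul {E : Type*} [NormedAddCommGroup E] [InnerProductSpace ℝ E]
    [CompleteSpace E] (p : ℝ) {ζ f φ : E → ℝ} (hζφ : ∀ᶠ x in 𝓝ˢ (tsupport φ), ζ x = 1)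
    (hf : Differentiable ℝ f) (hφ : Differentiable ℝ φ) (t : ℝ) (x : E) :
    glueField p ζ f (fun y => f y + t * φ y) x = ζ x • gradient f x + t • gradient φ x := by
  rw [glueField, gradient_add_const_mul (hf x) (hφ x)]
  by_cases hx : x ∈ tsupport φ
  · have hζx : ζ =ᶠ[𝓝 x] fun _ => 1 := eventually_nhdsSet_iff_forall.1 hζφ x hx
    simp [hζx.eq_of_nhds, hζx.gradient_eq]
  · simp [gradient_eq_zero_of_notMem_tsupport hx, image_eq_zero_of_notMem_tsupport hx]

end EulerLagrange

section WeakSolution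

variable {d : ℕ} {Ω : Set (Euc d)} {p : ℝ} {V v φ : Euc d → ℝ}

/-- A weak solution, of either sign, of `Q'(v) = 0` in `Ω`. The nonlinearities `|∇v|^(p-2) ∇v` and
`|v|^(p-2) v` are the duality maps of `ℝ^d` and `ℝ`. -/
def IsWeakSolution (Ω : Set (Euc d)) (V : Euc d → ℝ) (p : ℝ) (v : Euc d → ℝ) : Prop :=
  ∀ φ : Euc d → ℝ, IsTestFun Ω φ →
    ∫ x in Ω, (⟪dualityMap p (gradient v x), gradient φ x⟫
      + V x * (dualityMap p (v x) * φ x)) = 0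

theorem IsWeakSolution.isPositiveSolution (hv : IsWeakSolution Ω V p v) (hΩ : MeasurableSet Ω)
    (hvC : ContDiffOn ℝ 1 v Ω) (hpos : ∀ x ∈ Ω, 0 < v x) : IsPositiveSolution Ω V p v := by
  refine ⟨hvC, hpos, fun φ hφ => (setIntegral_congr_fun hΩ fun x hx => ?_).trans (hv φ hφ)⟩
  simp only [dualityMap_of_pos (hpos x hx), mul_assoc]
  simp only [dualityMap, real_inner_smul_left]

theorem exists_localization (hΩ : IsOpen Ω) (hv : ContDiffOn ℝ 1 v Ω) (hφ : IsTestFun Ω φ) :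
    ∃ ζ f : Euc d → ℝ, IsC1TestFun Ω ζ ∧ (∀ x, 0 ≤ ζ x) ∧ (∀ x, ζ x ≤ 1) ∧
      (∀ᶠ x in 𝓝ˢ (tsupport φ), ζ x = 1) ∧ ContDiff ℝ 1 f ∧ f =ᶠ[𝓝ˢ (tsupport ζ)] v := by
  obtain ⟨ζ, hζ, hζ₀, hζ₁, hζφ⟩ := exists_isTestFun_eventually_eq_one hφ.2.1 hΩ hφ.2.2
  obtain ⟨f, hf, hfv⟩ := exists_isC1TestFun_eventuallyEq hζ.2.1 hΩ hζ.2.2 hv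
  exact ⟨ζ, f, hζ.isC1TestFun, hζ₀, hζ₁, hζφ, hf.1, hfv⟩

theorem setIntegral_inner_dualityMap_smul_gradient_add_eq_zero {ι : Type*} {l : Filter ι} [l.NeBot]
    (hΩ : IsOpen Ω) (hp : 1 < p) (hV : LocBddPotential Ω V)
    (hQ : ∀ u, IsTestFun Ω u → 0 ≤ energyQ Ω V p u) {ζ f : Euc d → ℝ} (hζ : IsC1TestFun Ω ζ)
    (hζ₀ : ∀ x, 0 ≤ ζ x) (hζ₁ : ∀ x, ζ x ≤ 1) {u : ι → Euc d → ℝ} (hu : ∀ k, IsC1TestFun Ω (u k))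
    (huQ : Tendsto (fun k => energyQ Ω V p (u k)) l (𝓝 0)) (hf : ContDiff ℝ 1 f)
    (huf : Tendsto (fun k => ∫ x in tsupport ζ, ‖u k x - f x‖ ^ p) l (𝓝 0))
    (hφ : ContDiff ℝ 1 φ) (hζφ : ∀ᶠ x in 𝓝ˢ (tsupport φ), ζ x = 1) :
    ∫ x in tsupport ζ, (⟪dualityMap p (ζ x • gradient f x), gradient φ x⟫
      + V x * (dualityMap p (f x) * φ x)) = 0 := by
  have hmem {F : Type} [NormedAddCommGroup F] {a : Euc d → F} (ha : Continuous a) :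
      MemLp a (ENNReal.ofReal p) (volume.restrict (tsupport ζ)) :=
    memLp_restrict_of_isCompact ha hζ.2.1 _
  obtain ⟨M, hM⟩ := hV.exists_ae_abs_le hζ.2.1 hζ.2.2
  have hζdf : Continuous fun x => ζ x • gradient f x :=
    hζ.1.continuous.smul (continuous_gradient hf)
  refine integral_inner_dualityMap_add_eq_zero_of_forall_le hp hV.1.aestronglyMeasurable hM
    (hmem hζdf) (hmem (continuous_gradient hφ)) (hmem hf.continuous) (hmem hφ.continuous)
    fun t => ?_
  have hmin := integral_norm_smul_gradient_rpow_add_le_of_tendsto hΩ hp hV hQ hζ hζ₀ hζ₁ hu huQ hf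
    huf (h := fun x => f x + t * φ x) (hf.add (contDiff_const.mul hφ))
  simpa only [glueField_add_const_mul p hζφ (hf.differentiable one_ne_zero)
    (hφ.differentiable one_ne_zero), glue_add_const_mul p hζφ] using hmin

theorem groundState_isPositiveSolution_general {ι : Type*} {l : Filter ι} [l.NeBot]
    (hΩ : IsOpen Ω) (hp : 1 < p) (hV : LocBddPotential Ω V)
    (hQ : ∀ u, IsTestFun Ω u → 0 ≤ energyQ Ω V p u) {u : ι → Euc d → ℝ}
    (hu : ∀ k, IsTestFun Ω (u k)) (huQ : Tendsto (fun k => energyQ Ω V p (u k)) l (𝓝 0))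
    (hv : ContDiffOn ℝ 1 v Ω) (huv : ∀ K ⊆ Ω, IsCompact K →
      Tendsto (fun k => ∫ x in K, |u k x - v x| ^ p) l (𝓝 0)) :
    IsWeakSolution Ω V p v := by
  intro φ hφ
  obtain ⟨ζ, f, hζ, hζ₀, hζ₁, hζφ, hf, hfv⟩ := exists_localization hΩ hv hφ
  have huf : Tendsto (fun k => ∫ x in tsupport ζ, ‖u k x - f x‖ ^ p) l (𝓝 0) := by
    refine (huv _ hζ.2.2 hζ.2.1).congr fun k =>
      setIntegral_congr_fun (isClosed_tsupport ζ).measurableSet fun x hx => ?_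
    simp only [(hfv.self_of_nhdsSet : Set.EqOn f v _) hx, Real.norm_eq_abs]
  have hφ_zero : ∀ x ∉ tsupport φ, φ x = 0 ∧ gradient φ x = 0 := fun x hx =>
    ⟨image_eq_zero_of_notMem_tsupport hx, gradient_eq_zero_of_notMem_tsupport hx⟩
  have hsub : tsupport φ ⊆ tsupport ζ := fun x hx =>
    subset_tsupport ζ (by simp [hζφ.self_of_nhdsSet x hx])
  rw [setIntegral_eq_of_subset_of_forall_sdiff_eq_zero hΩ.measurableSet hζ.2.2 fun x hx => by
    simp [hφ_zero x fun hxφ => hx.2 (hsub hxφ)],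
    ← setIntegral_inner_dualityMap_smul_gradient_add_eq_zero hΩ hp hV hQ hζ hζ₀ hζ₁
      (fun k => (hu k).isC1TestFun) huQ hf huf hφ.isC1TestFun.1 hζφ]
  refine setIntegral_congr_fun (isClosed_tsupport ζ).measurableSet fun x hx => ?_
  by_cases hxφ : x ∈ tsupport φ
  · have hfvx : f =ᶠ[𝓝 x] v := eventually_nhdsSet_iff_forall.1 hfv x hx
    simp only [hζφ.self_of_nhdsSet x hxφ, one_smul, hfvx.gradient_eq, hfvx.eq_of_nhds]
  · simp [hφ_zero x hxφ]

end WeakSolution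

/-- A ground state of `Q` is a positive solution of the equation `Q'(u) = 0` in `Ω`. -/
theorem groundState_isPositiveSolution {d : ℕ} (hd : 2 ≤ d)
    (Ω : Set (Euc d)) (hΩo : IsOpen Ω) (hΩc : IsConnected Ω)
    {p : ℝ} (hp₁ : 1 < p) (V : Euc d → ℝ) (hV : LocBddPotential Ω V)
    (hQ : ∀ u : Euc d → ℝ, IsTestFun Ω u → 0 ≤ energyQ Ω V p u)
    (v : Euc d → ℝ) (hv : IsGroundState Ω V p v) :
    IsPositiveSolution Ω V p v := by
  obtain ⟨hvC, hpos, u, ⟨hu, -, _, -, -, -, -, huQ⟩, huv⟩ := hv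
  exact (groundState_isPositiveSolution_general hΩo hp₁ hV hQ hu huQ hvC huv).isPositiveSolution
    hΩo.measurableSet hvC hpos
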